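/- Let $d$ be a positive integer, let $p_1$ and $p_2$ be distinct primes with $p_2 \geq 3$, and let $n \geq 1$. Then $\sum_{i=0}^{n} A_{p_1,p_2}(i)\, C_{p_2,p_1}(n-i) \equiv 0 \pmod{p_2}$. -/

import Mathlib

/-- `A d p₁ p₂ n`: the number of partitions of `n` all of whose parts are of the form `k ^ d`
with `k` a positive integer divisible by neither `p₁` nor `p₂`, represented as multisets of
the bases `k`. -/
noncomputable def A (d p₁ p₂ n : ℕ) : ℕ :=
  Nat.card {s : Multiset ℕ //
    (∀ k ∈ s, 0 < k ∧ ¬ p₁ ∣ k ∧ ¬ p₂ ∣ k) ∧ (s.map (· ^ d)).sum = n}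

/-- `C d p₁ p₂ n`: the number of partitions of `n` into colored `d`-th powers of positive
integers not divisible by `p₂`, each part carrying one of `p₁ ^ d - 1` colors; represented
as multisets of pairs (base, color). -/
noncomputable def C (d p₁ p₂ n : ℕ) : ℕ :=
  Nat.card {s : Multiset (ℕ × ℕ) //
    (∀ x ∈ s, 0 < x.1 ∧ ¬ p₂ ∣ x.1 ∧ 1 ≤ x.2 ∧ x.2 ≤ p₁ ^ d - 1) ∧
    (s.map fun x => x.1 ^ d).sum = n}

/-!
Write `F_S` for the generating series of the multisets of elements of a weighted set `S`. It is
multiplicative over disjoint unions, so colouring the elements of `S` with `c` colours gives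
`F_S ^ c`. Take `S = {k > 0 : p₁ ∤ k}` with weight `k ^ d`, and let `T` be the set of elements of
`S` not divisible by `p₂`. Then `S` is the disjoint union of `T` and `p₂ S`, and multiplication
by `p₂` scales weights by `q = p₂ ^ d`, so `F_S(X) = F_T(X) * F_S(X ^ q)`. Modulo `p₂`, Frobenius
gives `F_S(X ^ q) = F_S(X) ^ q`. Cancelling the unit `F_S` leaves `F_T * F_S ^ (q - 1) = 1`, and
the two factors are the generating series of the two partition counts.
-/

open Finset.HasAntidiagonal (antidiagonal)
open PowerSeries (expand)
open scoped PowerSeries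

section WeightedMultisets

variable {α β : Type*}

/-- The partitions of `n` with parts in `S`, where a part `x` counts for `w x`, encoded as
multisets. -/
def weightedMultisets (w : α → ℕ) (S : Set α) (n : ℕ) : Set (Multiset α) :=
  {s | (∀ x ∈ s, x ∈ S) ∧ (s.map w).sum = n}

/-- The condition on a weight under which partitions with parts in `S` can be counted: every part
is positive and only finitely many parts lie below a given bound. -/
structure IsFinitaryOn (w : α → ℕ) (S : Set α) : Prop where
  pos : ∀ x ∈ S, 0 < w x
  finite_le : ∀ n, {x ∈ S | w x ≤ n}.Finite

variable {w : α → ℕ} {S T : Set α}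

theorem IsFinitaryOn.mono (hS : IsFinitaryOn w S) (hTS : T ⊆ S) : IsFinitaryOn w T where
  pos x hx := hS.pos x (hTS hx)
  finite_le n := (hS.finite_le n).subset fun _ hx => ⟨hTS hx.1, hx.2⟩

theorem IsFinitaryOn.prod (hS : IsFinitaryOn w S) {K : Set β} (hK : K.Finite) :
    IsFinitaryOn (fun x : α × β => w x.1) (S ×ˢ K) where
  pos x hx := hS.pos x.1 hx.1
  finite_le n := ((hS.finite_le n).prod hK).subset fun _ hx => ⟨⟨hx.1.1, hx.2⟩, hx.1.2⟩

theorem isFinitaryOn_pow {d : ℕ} (hd : d ≠ 0) : IsFinitaryOn (· ^ d) {k : ℕ | 0 < k} where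
  pos _ hk := Nat.pow_pos hk
  finite_le n := (Set.finite_Iic n).subset fun k hk => (Nat.le_self_pow hd k).trans hk.2

theorem IsFinitaryOn.finite_weightedMultisets (hS : IsFinitaryOn w S) (n : ℕ) :
    (weightedMultisets w S n).Finite := by
  classical
  refine (Set.finite_Iic (n • (hS.finite_le n).toFinset.val)).subset fun s ⟨hsS, hsum⟩ => ?_
  have card_le : s.card ≤ n := by
    have one_le : ∀ y ∈ s.map w, 1 ≤ y :=
      Multiset.forall_mem_map_iff.2 fun x hx => hS.pos x (hsS x hx)
    simpa [hsum] using Multiset.card_nsmul_le_sum one_le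
  refine Multiset.le_iff_count.2 fun x => ?_
  rw [Multiset.count_nsmul]
  by_cases hx : x ∈ s
  · have weight_le : w x ≤ n := hsum ▸ Multiset.le_sum_of_mem (Multiset.mem_map_of_mem w hx)
    rw [Multiset.count_eq_one_of_mem (Finset.nodup _) (by simpa using ⟨hsS x hx, weight_le⟩),
      mul_one]
    exact (Multiset.count_le_card x s).trans card_le
  · simp [Multiset.count_eq_zero_of_notMem hx]

theorem weightedMultisets_zero (hw : ∀ x ∈ S, 0 < w x) : weightedMultisets w S 0 = {0} := by
  refine Set.eq_singleton_iff_unique_mem.2 ⟨by simp [weightedMultisets], fun s ⟨hsS, hsum⟩ => ?_⟩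
  refine Multiset.eq_zero_of_forall_notMem fun x hx => (hw x (hsS x hx)).ne' ?_
  exact Multiset.sum_eq_zero_iff.1 hsum _ (Multiset.mem_map_of_mem w hx)

theorem weightedMultisets_empty (w : α → ℕ) (n : ℕ) :
    weightedMultisets w ∅ n = if n = 0 then {0} else ∅ := by
  ext s
  simp only [weightedMultisets, Set.mem_empty_iff_false, Set.mem_ofPred_eq,
    ← Multiset.eq_zero_iff_forall_notMem]
  split_ifs with hn
  · simp +contextual [hn]
  · simp +contextual [Ne.symm hn]

theorem ncard_weightedMultisets_image {φ : α → β} (hφ : φ.Injective) (w : β → ℕ) (S : Set α)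
    (n : ℕ) :
    (weightedMultisets w (φ '' S) n).ncard = (weightedMultisets (w ∘ φ) S n).ncard := by
  suffices weightedMultisets w (φ '' S) n = Multiset.map φ '' weightedMultisets (w ∘ φ) S n by
    rw [this, Set.ncard_image_of_injective _ (Multiset.map_injective hφ)]
  ext s
  constructor
  · rintro ⟨hsS, hsum⟩
    choose g hgS hg using hsS
    have map_g : (s.pmap g fun _ h => h).map φ = s := by
      simp [Multiset.map_pmap, hg, Multiset.pmap_eq_map]
    refine ⟨s.pmap g fun _ h => h, ⟨fun x hx => ?_, ?_⟩, map_g⟩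
    · obtain ⟨y, hy, rfl⟩ := Multiset.mem_pmap.1 hx
      exact hgS y hy
    · rw [← Multiset.map_map, map_g, hsum]
  · rintro ⟨t, ⟨htS, hsum⟩, rfl⟩
    refine ⟨Multiset.forall_mem_map_iff.2 fun x hx => Set.mem_image_of_mem φ (htS x hx), ?_⟩
    rw [Multiset.map_map, hsum]

theorem weightedMultisets_const_mul {q : ℕ} (hq : q ≠ 0) (w : α → ℕ) (S : Set α) (n : ℕ) :
    weightedMultisets (fun x => q * w x) S n =
      if q ∣ n then weightedMultisets w S (n / q) else ∅ := by
  ext s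
  simp only [weightedMultisets, Multiset.sum_map_mul_left, Set.mem_ofPred_eq]
  split_ifs with hqn
  · obtain ⟨m, rfl⟩ := hqn
    simp [hq]
  · refine iff_of_false (fun hs => hqn ?_) (Set.notMem_empty s)
    exact Dvd.intro _ hs.2

theorem injOn_multiset_add_of_disjoint (hST : Disjoint S T) :
    Set.InjOn (fun p : Multiset α × Multiset α => p.1 + p.2)
      ({s | ∀ x ∈ s, x ∈ S} ×ˢ {t | ∀ x ∈ t, x ∈ T}) := by
  classical
  have filter_add {s t : Multiset α} (hs : ∀ x ∈ s, x ∈ S) (ht : ∀ x ∈ t, x ∈ T) :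
      (s + t).filter (· ∈ S) = s := by
    rw [Multiset.filter_add, Multiset.filter_eq_self.2 hs, Multiset.filter_eq_nil.2, add_zero]
    exact fun x hx hxS => hST.notMem_of_mem_left hxS (ht x hx)
  rintro ⟨s, t⟩ ⟨hs : ∀ x ∈ s, x ∈ S, ht⟩ ⟨s', t'⟩ ⟨hs' : ∀ x ∈ s', x ∈ S, ht'⟩
    (h : s + t = s' + t')
  obtain rfl : s = s' := by rw [← filter_add hs ht, h, filter_add hs' ht']
  rw [add_left_cancel h]

theorem weightedMultisets_union (w : α → ℕ) (S T : Set α) (n : ℕ) :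
    weightedMultisets w (S ∪ T) n = (fun p : Multiset α × Multiset α => p.1 + p.2) ''
      ⋃ ij ∈ (antidiagonal n : Set (ℕ × ℕ)),
        weightedMultisets w S ij.1 ×ˢ weightedMultisets w T ij.2 := by
  classical
  ext u
  simp only [Set.mem_image, Set.mem_iUnion, Finset.mem_coe,
    Finset.HasAntidiagonal.mem_antidiagonal]
  constructor
  · rintro ⟨hu, hsum⟩
    have split := Multiset.filter_add_not (· ∈ S) u
    refine ⟨(u.filter (· ∈ S), u.filter (· ∉ S)),
      ⟨(((u.filter (· ∈ S)).map w).sum, ((u.filter (· ∉ S)).map w).sum), ?_,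
        ⟨fun x hx => (Multiset.mem_filter.1 hx).2, rfl⟩, fun x hx => ?_, rfl⟩, split⟩
    · rw [← Multiset.sum_add, ← Multiset.map_add, split, hsum]
    · obtain ⟨hxu, hxS⟩ := Multiset.mem_filter.1 hx
      exact (hu x hxu).resolve_left hxS
  · rintro ⟨⟨s, t⟩, ⟨⟨i, j⟩, rfl, ⟨hsS, hs⟩, htT, ht⟩, rfl⟩
    refine ⟨fun x hx => (Multiset.mem_add.1 hx).imp (hsS x) (htT x), ?_⟩
    rw [Multiset.map_add, Multiset.sum_add, hs, ht]

theorem ncard_weightedMultisets_union (hS : IsFinitaryOn w S) (hT : IsFinitaryOn w T)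
    (hST : Disjoint S T) (n : ℕ) :
    (weightedMultisets w (S ∪ T) n).ncard = ∑ ij ∈ antidiagonal n,
      (weightedMultisets w S ij.1).ncard * (weightedMultisets w T ij.2).ncard := by
  rw [weightedMultisets_union, Set.InjOn.ncard_image,
    (Finset.finite_toSet _).ncard_biUnion, finsum_mem_coe_finset]
  · simp only [Set.ncard_prod]
  · exact fun ij _ => (hS.finite_weightedMultisets _).prod (hT.finite_weightedMultisets _)
  · intro ij _ ij' _ hne
    refine Set.disjoint_left.2 fun p ⟨⟨_, hi⟩, ⟨_, hj⟩⟩ ⟨⟨_, hi'⟩, ⟨_, hj'⟩⟩ => hne ?_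
    exact Prod.ext (hi.symm.trans hi') (hj.symm.trans hj')
  · exact (injOn_multiset_add_of_disjoint hST).mono
      (Set.iUnion₂_subset fun _ _ => Set.prod_mono (fun _ hs => hs.1) fun _ ht => ht.1)

end WeightedMultisets

section GeneratingSeries

variable {α β κ : Type*}

/-- The generating series, with coefficients in `R`, of the number of partitions with parts in `S`
weighted by `w`. The coefficient of `X ^ n` is the junk value `0` if there are infinitely many
partitions of `n`. -/
noncomputable def multisetSeries (R : Type*) [Semiring R] (w : α → ℕ) (S : Set α) : R⟦X⟧ :=
  .mk fun n => ((weightedMultisets w S n).ncard : R)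

section Semiring

variable (R : Type*) [Semiring R] {w : α → ℕ} {S T : Set α}

theorem constantCoeff_multisetSeries (hw : ∀ x ∈ S, 0 < w x) :
    (multisetSeries R w S).constantCoeff = 1 := by
  rw [← PowerSeries.coeff_zero_eq_constantCoeff_apply, multisetSeries, PowerSeries.coeff_mk,
    weightedMultisets_zero hw, Set.ncard_singleton, Nat.cast_one]

theorem multisetSeries_empty (w : α → ℕ) : multisetSeries R w ∅ = 1 := by
  ext n
  rw [multisetSeries, PowerSeries.coeff_mk, PowerSeries.coeff_one, weightedMultisets_empty]
  split_ifs <;> simp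

theorem multisetSeries_image {φ : α → β} (hφ : φ.Injective) (w : β → ℕ) (S : Set α) :
    multisetSeries R w (φ '' S) = multisetSeries R (w ∘ φ) S := by
  simp only [multisetSeries, ncard_weightedMultisets_image hφ]

theorem multisetSeries_union (hS : IsFinitaryOn w S) (hT : IsFinitaryOn w T)
    (hST : Disjoint S T) :
    multisetSeries R w (S ∪ T) = multisetSeries R w S * multisetSeries R w T := by
  ext n
  simp only [multisetSeries, PowerSeries.coeff_mul, PowerSeries.coeff_mk,
    ncard_weightedMultisets_union hS hT hST, Nat.cast_sum, Nat.cast_mul]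

theorem multisetSeries_prod (hS : IsFinitaryOn w S) (K : Finset κ) :
    multisetSeries R (fun x : α × κ => w x.1) (S ×ˢ (K : Set κ)) =
      multisetSeries R w S ^ K.card := by
  classical
  induction K using Finset.induction_on with
  | empty => simp [multisetSeries_empty]
  | insert c K hc ih =>
    have hinsert := hS.prod (insert c K).finite_toSet
    rw [Finset.coe_insert, Set.prod_insert] at hinsert ⊢
    have hdisj : Disjoint ((fun x => (x, c)) '' S) (S ×ˢ (K : Set κ)) := by
      rw [Set.disjoint_left]
      rintro _ ⟨x, -, rfl⟩ ⟨-, hcK⟩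
      exact hc hcK
    rw [multisetSeries_union R (hinsert.mono Set.subset_union_left)
        (hinsert.mono Set.subset_union_right) hdisj,
      multisetSeries_image R (Prod.mk_left_injective c), ih, Finset.card_insert_of_notMem hc,
      pow_succ']
    rfl

end Semiring

section CommRing

variable (R : Type*) [CommRing R] {w : α → ℕ} {S : Set α}

theorem multisetSeries_const_mul {q : ℕ} (hq : q ≠ 0) (w : α → ℕ) (S : Set α) :
    multisetSeries R (fun x => q * w x) S = expand q hq (multisetSeries R w S) := by
  ext n
  simp only [multisetSeries, PowerSeries.coeff_expand, PowerSeries.coeff_mk,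
    weightedMultisets_const_mul hq]
  split_ifs <;> simp

theorem expand_multisetSeries (p e : ℕ) [ExpChar R p] (w : α → ℕ) (S : Set α) :
    expand (p ^ e) (pow_ne_zero e (expChar_ne_zero R p)) (multisetSeries R w S) =
      multisetSeries R w S ^ p ^ e := by
  have frobenius_fixes : PowerSeries.map (iterateFrobenius R p e) (multisetSeries R w S) =
      multisetSeries R w S := by
    ext n
    simp only [multisetSeries, PowerSeries.coeff_map, PowerSeries.coeff_mk, map_natCast]
  conv_lhs => rw [← frobenius_fixes, ← PowerSeries.map_expand]
  exact MvPowerSeries.map_iterateFrobenius_expand p (expChar_ne_zero R p) _ e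

theorem multisetSeries_sdiff_image_mul_prod (p e : ℕ) [ExpChar R p] (hS : IsFinitaryOn w S)
    {φ : α → α} (hφ : φ.Injective) (hφS : Set.MapsTo φ S S) (hw : ∀ x, w (φ x) = p ^ e * w x)
    {K : Finset κ} (hK : K.card = p ^ e - 1) :
    multisetSeries R w (S \ φ '' S) *
      multisetSeries R (fun x : α × κ => w x.1) (S ×ˢ (K : Set κ)) = 1 := by
  have hp : p ^ e ≠ 0 := pow_ne_zero e (expChar_ne_zero R p)
  set F := multisetSeries R w S
  have image_eq : multisetSeries R w (φ '' S) = F ^ p ^ e := by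
    rw [multisetSeries_image R hφ, ← expand_multisetSeries R p e, ← multisetSeries_const_mul R hp]
    exact congrArg (multisetSeries R · S) (funext hw)
  have split : multisetSeries R w (S \ φ '' S) * F ^ p ^ e = F := by
    rw [← image_eq, ← multisetSeries_union R (hS.mono Set.sdiff_subset) (hS.mono hφS.image_subset)
      Set.disjoint_sdiff_left, Set.sdiff_union_of_subset hφS.image_subset]
  have unit : IsUnit F := by
    rw [PowerSeries.isUnit_iff_constantCoeff, constantCoeff_multisetSeries R hS.pos]
    exact isUnit_one
  refine unit.mul_right_cancel ?_
  rw [multisetSeries_prod R hS, hK, one_mul, mul_assoc, pow_sub_one_mul hp, split]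

end CommRing

end GeneratingSeries

theorem A_eq_ncard (d p₁ p₂ n : ℕ) :
    A d p₁ p₂ n = (weightedMultisets (· ^ d) {k | 0 < k ∧ ¬ p₁ ∣ k ∧ ¬ p₂ ∣ k} n).ncard := rfl

theorem C_eq_ncard (d p₁ p₂ n : ℕ) :
    C d p₁ p₂ n = (weightedMultisets (fun x : ℕ × ℕ => x.1 ^ d)
      ({k | 0 < k ∧ ¬ p₂ ∣ k} ×ˢ (Finset.Icc 1 (p₁ ^ d - 1) : Set ℕ)) n).ncard := by
  simp only [C, weightedMultisets, Set.mem_prod, Set.mem_ofPred_eq, Finset.coe_Icc, Set.mem_Icc,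
    and_assoc]
  rfl

theorem sdiff_image_mul_left_eq_not_dvd (p₁ p₂ : ℕ) :
    {k | 0 < k ∧ ¬ p₁ ∣ k} \ (p₂ * ·) '' {k | 0 < k ∧ ¬ p₁ ∣ k} =
      {k | 0 < k ∧ ¬ p₁ ∣ k ∧ ¬ p₂ ∣ k} := by
  ext k
  refine ⟨fun ⟨⟨hk, hp₁k⟩, hnot⟩ => ⟨hk, hp₁k, ?_⟩, fun ⟨hk, hp₁k, hp₂k⟩ => ⟨⟨hk, hp₁k⟩, ?_⟩⟩
  · rintro ⟨m, rfl⟩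
    exact hnot ⟨m, ⟨pos_of_mul_pos_right hk p₂.zero_le, fun h => hp₁k (h.mul_left p₂)⟩, rfl⟩
  · rintro ⟨m, -, rfl⟩
    exact hp₂k (dvd_mul_right p₂ m)

theorem stmt2_general (d p₁ p₂ n : ℕ) (hd : 0 < d) (hp₂ : p₂.Prime) (hcop : p₁.Coprime p₂)
    (hn : 1 ≤ n) :
    (∑ i ∈ Finset.range (n + 1), A d p₁ p₂ i * C d p₂ p₁ (n - i)) ≡ 0 [MOD p₂] := by
  have : Fact p₂.Prime := ⟨hp₂⟩
  set S := {k | 0 < k ∧ ¬ p₁ ∣ k}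
  have finitary : IsFinitaryOn (· ^ d) S := (isFinitaryOn_pow hd.ne').mono fun _ hk => hk.1
  have mapsTo : Set.MapsTo (p₂ * ·) S S := fun k hk =>
    ⟨Nat.mul_pos hp₂.pos hk.1, fun h => hk.2 (hcop.dvd_of_dvd_mul_left h)⟩
  have series_mul : multisetSeries (ZMod p₂) (· ^ d) (S \ (p₂ * ·) '' S) *
      multisetSeries (ZMod p₂) (fun x : ℕ × ℕ => x.1 ^ d)
        (S ×ˢ (Finset.Icc 1 (p₂ ^ d - 1) : Set ℕ)) = 1 :=
    multisetSeries_sdiff_image_mul_prod (ZMod p₂) p₂ d finitary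
      (mul_right_injective₀ hp₂.ne_zero) mapsTo (fun k => mul_pow p₂ k d) (by simp)
  have coeff_mul := congrArg (PowerSeries.coeff n) series_mul
  rw [sdiff_image_mul_left_eq_not_dvd, PowerSeries.coeff_mul,
    Finset.Nat.sum_antidiagonal_eq_sum_range_succ_mk, PowerSeries.coeff_one,
    if_neg (Nat.one_le_iff_ne_zero.1 hn)] at coeff_mul
  rw [← ZMod.natCast_eq_natCast_iff]
  simpa only [A_eq_ncard, C_eq_ncard, multisetSeries, PowerSeries.coeff_mk, Nat.cast_sum,
    Nat.cast_mul, Nat.cast_zero] using coeff_mul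

theorem stmt2 (d p₁ p₂ n : ℕ) (hd : 0 < d) (hp₁ : p₁.Prime) (hp₂ : p₂.Prime)
    (hne : p₁ ≠ p₂) (hp₂3 : 3 ≤ p₂) (hn : 1 ≤ n) :
    (∑ i ∈ Finset.range (n + 1), A d p₁ p₂ i * C d p₂ p₁ (n - i)) ≡ 0 [MOD p₂] :=
  stmt2_general d p₁ p₂ n hd hp₂ ((Nat.coprime_primes hp₁ hp₂).2 hne) hn
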